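/- arXiv:2501.00122 — 8 statements merged into one kernel-verified Lean document; each statement's English description precedes it below -/
import Mathlib

section
/- Let (C₁, ε₁) and (C₂, ε₂) be counital objects in a monoidal category 𝒜. The following are equivalent: (1L) C₁ is a retract of X ⊗ C₂ for some object X of 𝒜; (1R) C₁ is a retract of C₂ ⊗ X for some object X of 𝒜; (2L) the morphism (C₁ ◁ ε₂) ≫ ρ_{C₁} : C₁ ⊗ C₂ ⟶ C₁ is a split epimorphism; (2R) the morphism (ε₂ ▷ C₁) ≫ λ_{C₁} : C₂ ⊗ C₁ ⟶ C₁ is a split epimorphism; (3) there exists a morphism θ : C₁ ⟶ C₂ with θ ≫ ε₂ = ε₁. -/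
open CategoryTheory MonoidalCategory

/-!
Tensoring with `ε : C ⟶ 𝟙_ 𝒜` on the right gives a natural transformation `- ⊗ C ⟶ Id`, and on
the left one `C ⊗ - ⟶ Id`. By naturality, the objects at which such a transformation is a split
epimorphism are closed under retracts; by associativity, they are also closed under tensoring on
the other side. For a counital object `C` they are therefore exactly the retracts of the objects
`X ⊗ C`, respectively `C ⊗ X`. The interchange law turns a splitting at `C₁` of either
transformation for `ε₂` into a morphism `θ` with `θ ≫ ε₂ = ε₁`; conversely, given such a `θ`, the
transformations for `ε₁` factor through those for `ε₂`.
-/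

section SplitEpi

variable {𝒞 𝒟 : Type*} [Category 𝒞] [Category 𝒟]

lemma isSplitEpi_of_comp {X Y Z : 𝒞} (f : X ⟶ Y) {g : Y ⟶ Z} (hfg : IsSplitEpi (f ≫ g)) :
    IsSplitEpi g :=
  .mk' ⟨section_ (f ≫ g) ≫ f, by rw [Category.assoc, IsSplitEpi.id]⟩

lemma isSplitEpi_app_of_retract {F G : 𝒞 ⥤ 𝒟} (τ : F ⟶ G) {A B : 𝒞} (h : Retract A B)
    (hB : IsSplitEpi (τ.app B)) : IsSplitEpi (τ.app A) := by
  refine .mk' ⟨G.map h.i ≫ section_ (τ.app B) ≫ F.map h.r, ?_⟩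
  calc (G.map h.i ≫ section_ (τ.app B) ≫ F.map h.r) ≫ τ.app A
      = G.map h.i ≫ (section_ (τ.app B) ≫ τ.app B) ≫ G.map h.r := by
        simp only [Category.assoc, NatTrans.naturality]
    _ = G.map (h.i ≫ h.r) := by rw [IsSplitEpi.id, Category.id_comp, G.map_comp]
    _ = 𝟙 (G.obj A) := by rw [h.retract, G.map_id]

lemma exists_comp_eq_of_isSplitEpi {X Y Z W : 𝒞} {p : X ⟶ Y} (hp : IsSplitEpi p) {f : Y ⟶ Z}
    {q : X ⟶ W} {g : W ⟶ Z} (w : p ≫ f = q ≫ g) : ∃ θ : Y ⟶ W, θ ≫ g = f :=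
  ⟨section_ p ≫ q, by rw [Category.assoc, ← w, ← Category.assoc, IsSplitEpi.id, Category.id_comp]⟩

end SplitEpi

section Contraction

variable {𝒜 : Type*} [Category 𝒜] [MonoidalCategory 𝒜] {C D : 𝒜}

/-- The natural transformation `C ⊗ - ⟶ Id` induced by a morphism `ε : C ⟶ 𝟙_ 𝒜`; condition (2R)
says that, for `ε = ε₂`, it is a split epimorphism at `C₁`. -/
def leftContraction (ε : C ⟶ 𝟙_ 𝒜) : tensorLeft C ⟶ 𝟭 𝒜 where
  app X := ε ▷ X ≫ (λ_ X).hom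
  naturality X Y f := by
    change C ◁ f ≫ ε ▷ Y ≫ (λ_ Y).hom = (ε ▷ X ≫ (λ_ X).hom) ≫ f
    rw [whisker_exchange_assoc, leftUnitor_naturality, Category.assoc]

/-- The natural transformation `- ⊗ C ⟶ Id` induced by a morphism `ε : C ⟶ 𝟙_ 𝒜`; condition (2L)
says that, for `ε = ε₂`, it is a split epimorphism at `C₁`. -/
def rightContraction (ε : C ⟶ 𝟙_ 𝒜) : tensorRight C ⟶ 𝟭 𝒜 where
  app X := X ◁ ε ≫ (ρ_ X).hom
  naturality X Y f := by
    change f ▷ C ≫ Y ◁ ε ≫ (ρ_ Y).hom = (X ◁ ε ≫ (ρ_ X).hom) ≫ f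
    rw [← whisker_exchange_assoc, rightUnitor_naturality, Category.assoc]

lemma leftContraction_app_tensorObj (ε : C ⟶ 𝟙_ 𝒜) (X Y : 𝒜) :
    (leftContraction ε).app (X ⊗ Y) = (α_ C X Y).inv ≫ (leftContraction ε).app X ▷ Y := by
  simp [leftContraction]

lemma rightContraction_app_tensorObj (ε : C ⟶ 𝟙_ 𝒜) (X Y : 𝒜) :
    (rightContraction ε).app (X ⊗ Y) = (α_ X Y C).hom ≫ X ◁ (rightContraction ε).app Y := by
  simp [rightContraction]

lemma isSplitEpi_leftContraction_app_tensorObj {ε : C ⟶ 𝟙_ 𝒜} {X : 𝒜}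
    (hX : IsSplitEpi ((leftContraction ε).app X)) (Y : 𝒜) :
    IsSplitEpi ((leftContraction ε).app (X ⊗ Y)) := by
  have : IsSplitEpi ((leftContraction ε).app X ▷ Y) :=
    inferInstanceAs (IsSplitEpi ((tensorRight Y).map _))
  rw [leftContraction_app_tensorObj]
  infer_instance

lemma isSplitEpi_rightContraction_app_tensorObj {ε : C ⟶ 𝟙_ 𝒜} {Y : 𝒜}
    (hY : IsSplitEpi ((rightContraction ε).app Y)) (X : 𝒜) :
    IsSplitEpi ((rightContraction ε).app (X ⊗ Y)) := by
  have : IsSplitEpi (X ◁ (rightContraction ε).app Y) :=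
    inferInstanceAs (IsSplitEpi ((tensorLeft X).map _))
  rw [rightContraction_app_tensorObj]
  infer_instance

lemma leftContraction_comp_app (θ : C ⟶ D) (ε : D ⟶ 𝟙_ 𝒜) (X : 𝒜) :
    (leftContraction (θ ≫ ε)).app X = θ ▷ X ≫ (leftContraction ε).app X := by
  simp [leftContraction]

lemma rightContraction_comp_app (θ : C ⟶ D) (ε : D ⟶ 𝟙_ 𝒜) (X : 𝒜) :
    (rightContraction (θ ≫ ε)).app X = X ◁ θ ≫ (rightContraction ε).app X := by
  simp [rightContraction]

lemma isSplitEpi_leftContraction_app_of_comp {θ : C ⟶ D} {ε : D ⟶ 𝟙_ 𝒜} {X : 𝒜}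
    (h : IsSplitEpi ((leftContraction (θ ≫ ε)).app X)) :
    IsSplitEpi ((leftContraction ε).app X) :=
  isSplitEpi_of_comp (θ ▷ X) (leftContraction_comp_app θ ε X ▸ h)

lemma isSplitEpi_rightContraction_app_of_comp {θ : C ⟶ D} {ε : D ⟶ 𝟙_ 𝒜} {X : 𝒜}
    (h : IsSplitEpi ((rightContraction (θ ≫ ε)).app X)) :
    IsSplitEpi ((rightContraction ε).app X) :=
  isSplitEpi_of_comp (X ◁ θ) (rightContraction_comp_app θ ε X ▸ h)

lemma rightContraction_app_comp_eq_leftContraction_app_comp (ε : C ⟶ 𝟙_ 𝒜) (δ : D ⟶ 𝟙_ 𝒜) :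
    (rightContraction δ).app C ≫ ε = (leftContraction ε).app D ≫ δ := by
  calc (C ◁ δ ≫ (ρ_ C).hom) ≫ ε
      = C ◁ δ ≫ ε ▷ 𝟙_ 𝒜 ≫ (ρ_ (𝟙_ 𝒜)).hom := by
        rw [Category.assoc, rightUnitor_naturality]
    _ = ε ▷ D ≫ 𝟙_ 𝒜 ◁ δ ≫ (λ_ (𝟙_ 𝒜)).hom := by rw [whisker_exchange_assoc, unitors_equal]
    _ = (ε ▷ D ≫ (λ_ D).hom) ≫ δ := by rw [leftUnitor_naturality, Category.assoc]

end Contraction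

/-- Theorem A.2 (counital objects): for counital objects `(C₁, ε₁)` and `(C₂, ε₂)` in a
monoidal category `𝒜`, the five conditions (1L), (1R), (2L), (2R), (3) are equivalent. -/
theorem counital_object_tfae {𝒜 : Type*} [Category 𝒜] [MonoidalCategory 𝒜]
    (C₁ C₂ : 𝒜) (ε₁ : C₁ ⟶ 𝟙_ 𝒜) (ε₂ : C₂ ⟶ 𝟙_ 𝒜)
    (h₁L : IsSplitEpi ((ε₁ ▷ C₁) ≫ (λ_ C₁).hom))
    (h₁R : IsSplitEpi ((C₁ ◁ ε₁) ≫ (ρ_ C₁).hom))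
    (h₂L : IsSplitEpi ((ε₂ ▷ C₂) ≫ (λ_ C₂).hom))
    (h₂R : IsSplitEpi ((C₂ ◁ ε₂) ≫ (ρ_ C₂).hom)) :
    List.TFAE [
      -- (1L) C₁ is a retract of X ⊗ C₂ for some X
      ∃ (X : 𝒜) (i : C₁ ⟶ X ⊗ C₂) (r : X ⊗ C₂ ⟶ C₁), i ≫ r = 𝟙 C₁,
      -- (1R) C₁ is a retract of C₂ ⊗ X for some X
      ∃ (X : 𝒜) (i : C₁ ⟶ C₂ ⊗ X) (r : C₂ ⊗ X ⟶ C₁), i ≫ r = 𝟙 C₁,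
      -- (2L)
      IsSplitEpi ((C₁ ◁ ε₂) ≫ (ρ_ C₁).hom),
      -- (2R)
      IsSplitEpi ((ε₂ ▷ C₁) ≫ (λ_ C₁).hom),
      -- (3)
      ∃ θ : C₁ ⟶ C₂, θ ≫ ε₂ = ε₁] := by
  tfae_have 1 → 3 := fun ⟨X, i, r, hir⟩ ↦ isSplitEpi_app_of_retract (rightContraction ε₂)
    ⟨i, r, hir⟩ (isSplitEpi_rightContraction_app_tensorObj h₂R X)
  tfae_have 2 → 4 := fun ⟨X, i, r, hir⟩ ↦ isSplitEpi_app_of_retract (leftContraction ε₂)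
    ⟨i, r, hir⟩ (isSplitEpi_leftContraction_app_tensorObj h₂L X)
  tfae_have 3 → 1 := fun ⟨⟨s, hs⟩⟩ ↦ ⟨C₁, s, _, hs⟩
  tfae_have 4 → 2 := fun ⟨⟨s, hs⟩⟩ ↦ ⟨C₁, s, _, hs⟩
  tfae_have 3 → 5 := fun h ↦ exists_comp_eq_of_isSplitEpi h
    (rightContraction_app_comp_eq_leftContraction_app_comp ε₁ ε₂)
  tfae_have 4 → 5 := fun h ↦ exists_comp_eq_of_isSplitEpi h
    (rightContraction_app_comp_eq_leftContraction_app_comp ε₂ ε₁).symm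
  tfae_have 5 → 3 := by
    rintro ⟨θ, rfl⟩
    exact isSplitEpi_rightContraction_app_of_comp h₁R
  tfae_have 5 → 4 := by
    rintro ⟨θ, rfl⟩
    exact isSplitEpi_leftContraction_app_of_comp h₁L
  tfae_finish
end

section
/- Let P ⟶ε 𝟙 ⟶η Q ⟶δ P⟦1⟧ be a distinguished triangle in 𝒜. The following are equivalent: (1) (P, ε) is a counital idempotent; (2) (Q, η) is a unital idempotent; (3) P ⊗ Q ≅ 0 and Q ⊗ P ≅ 0. -/
open CategoryTheory Category Limits MonoidalCategory Pretriangulated ZeroObject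

/-!
In a distinguished triangle one map is invertible exactly when the opposite object vanishes. Applied
to the triangles `P ⊗ X ⟶ X ⟶ Q ⊗ X` and `X ⊗ P ⟶ X ⟶ X ⊗ Q` with `X = P` or `X = Q`, this turns
each of the four idempotency conditions into the vanishing of a mixed product: `ε ▷ P` and `Q ◁ η`
are both controlled by `Q ⊗ P`, while `P ◁ ε` and `η ▷ Q` are both controlled by `P ⊗ Q`.
-/

section ZeroObject

variable {C : Type*} [Category C] [HasZeroObject C]

lemma nonempty_iso_zero_iff_isZero (X : C) : Nonempty (X ≅ 0) ↔ IsZero X :=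
  ⟨fun ⟨e⟩ => (isZero_zero C).of_iso e, fun h => ⟨h.isoZero⟩⟩

end ZeroObject

section Idempotent

variable {C : Type*} [Category C] [MonoidalCategory C]

/-- Counital idempotents `(P, ε)`, as a property of the counit `ε`. Both one-sided conditions are
required because `C` carries no braiding. -/
def IsCounitalIdempotent {P : C} (ε : P ⟶ 𝟙_ C) : Prop :=
  IsIso (ε ▷ P ≫ (λ_ P).hom) ∧ IsIso (P ◁ ε ≫ (ρ_ P).hom)

/-- Unital idempotents `(Q, η)`, as a property of the unit `η`; dual to `IsCounitalIdempotent`. -/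
def IsUnitalIdempotent {Q : C} (η : 𝟙_ C ⟶ Q) : Prop :=
  IsIso ((λ_ Q).inv ≫ η ▷ Q) ∧ IsIso ((ρ_ Q).inv ≫ Q ◁ η)

end Idempotent

section TriangulatedFunctor

variable {C D : Type*} [Category C] [Category D] [HasZeroObject C] [HasZeroObject D]
  [Preadditive C] [Preadditive D] [HasShift C ℤ] [HasShift D ℤ]
  [∀ n : ℤ, (shiftFunctor C n).Additive] [∀ n : ℤ, (shiftFunctor D n).Additive]
  [Pretriangulated C] [Pretriangulated D]
  (F : C ⥤ D) [F.CommShift ℤ] [F.IsTriangulated] {T : Triangle C}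

lemma isIso_map_mor₁_iff_isZero_obj_obj₃ (hT : T ∈ distTriang C) :
    IsIso (F.map T.mor₁) ↔ IsZero (F.obj T.obj₃) :=
  (Triangle.isZero₃_iff_isIso₁ _ (F.map_distinguished T hT)).symm

lemma isIso_map_mor₂_iff_isZero_obj_obj₁ (hT : T ∈ distTriang C) :
    IsIso (F.map T.mor₂) ↔ IsZero (F.obj T.obj₁) :=
  (Triangle.isZero₁_iff_isIso₂ _ (F.map_distinguished T hT)).symm

end TriangulatedFunctor

section UnitTriangle

variable {C : Type*} [Category C] [MonoidalCategory C] [HasZeroObject C] [Preadditive C]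
  [HasShift C ℤ] [∀ n : ℤ, (shiftFunctor C n).Additive] [Pretriangulated C]
  {P Q : C} {ε : P ⟶ 𝟙_ C} {η : 𝟙_ C ⟶ Q} {δ : Q ⟶ P⟦(1 : ℤ)⟧}

section TensorRight

variable (X : C) [(tensorRight X).CommShift ℤ] [(tensorRight X).IsTriangulated]

lemma isIso_whiskerRight_comp_leftUnitor_hom_iff_isZero (hT : Triangle.mk ε η δ ∈ distTriang C) :
    IsIso (ε ▷ X ≫ (λ_ X).hom) ↔ IsZero (Q ⊗ X) :=
  (isIso_comp_right_iff _ _).trans (isIso_map_mor₁_iff_isZero_obj_obj₃ (tensorRight X) hT)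

lemma isIso_leftUnitor_inv_comp_whiskerRight_iff_isZero (hT : Triangle.mk ε η δ ∈ distTriang C) :
    IsIso ((λ_ X).inv ≫ η ▷ X) ↔ IsZero (P ⊗ X) :=
  (isIso_comp_left_iff _ _).trans (isIso_map_mor₂_iff_isZero_obj_obj₁ (tensorRight X) hT)

end TensorRight

section TensorLeft

variable (X : C) [(tensorLeft X).CommShift ℤ] [(tensorLeft X).IsTriangulated]

lemma isIso_whiskerLeft_comp_rightUnitor_hom_iff_isZero (hT : Triangle.mk ε η δ ∈ distTriang C) :
    IsIso (X ◁ ε ≫ (ρ_ X).hom) ↔ IsZero (X ⊗ Q) :=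
  (isIso_comp_right_iff _ _).trans (isIso_map_mor₁_iff_isZero_obj_obj₃ (tensorLeft X) hT)

lemma isIso_rightUnitor_inv_comp_whiskerLeft_iff_isZero (hT : Triangle.mk ε η δ ∈ distTriang C) :
    IsIso ((ρ_ X).inv ≫ X ◁ η) ↔ IsZero (X ⊗ P) :=
  (isIso_comp_left_iff _ _).trans (isIso_map_mor₂_iff_isZero_obj_obj₁ (tensorLeft X) hT)

end TensorLeft

lemma isCounitalIdempotent_iff_isZero
    [(tensorLeft P).CommShift ℤ] [(tensorLeft P).IsTriangulated]
    [(tensorRight P).CommShift ℤ] [(tensorRight P).IsTriangulated]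
    (hT : Triangle.mk ε η δ ∈ distTriang C) :
    IsCounitalIdempotent ε ↔ IsZero (P ⊗ Q) ∧ IsZero (Q ⊗ P) :=
  (and_congr (isIso_whiskerRight_comp_leftUnitor_hom_iff_isZero P hT)
    (isIso_whiskerLeft_comp_rightUnitor_hom_iff_isZero P hT)).trans and_comm

lemma isUnitalIdempotent_iff_isZero
    [(tensorLeft Q).CommShift ℤ] [(tensorLeft Q).IsTriangulated]
    [(tensorRight Q).CommShift ℤ] [(tensorRight Q).IsTriangulated]
    (hT : Triangle.mk ε η δ ∈ distTriang C) :
    IsUnitalIdempotent η ↔ IsZero (P ⊗ Q) ∧ IsZero (Q ⊗ P) :=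
  and_congr (isIso_leftUnitor_inv_comp_whiskerRight_iff_isZero Q hT)
    (isIso_rightUnitor_inv_comp_whiskerLeft_iff_isZero Q hT)

theorem complementary_idempotents_tfae_general
    [(tensorLeft P).CommShift ℤ] [(tensorLeft P).IsTriangulated]
    [(tensorRight P).CommShift ℤ] [(tensorRight P).IsTriangulated]
    [(tensorLeft Q).CommShift ℤ] [(tensorLeft Q).IsTriangulated]
    [(tensorRight Q).CommShift ℤ] [(tensorRight Q).IsTriangulated]
    (hT : Triangle.mk ε η δ ∈ distTriang C) :
    List.TFAE [
      IsCounitalIdempotent ε,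
      IsUnitalIdempotent η,
      IsZero (P ⊗ Q) ∧ IsZero (Q ⊗ P)] := by
  tfae_have 1 ↔ 3 := isCounitalIdempotent_iff_isZero hT
  tfae_have 2 ↔ 3 := isUnitalIdempotent_iff_isZero hT
  tfae_finish

end UnitTriangle

/-- Proposition (complementary idempotents): given a distinguished triangle
`P ⟶ε 𝟙 ⟶η Q ⟶δ P⟦1⟧` in a monoidal pretriangulated category `𝒜`, the following are
equivalent: (1) `(P, ε)` is a counital idempotent; (2) `(Q, η)` is a unital idempotent;
(3) `P ⊗ Q ≅ 0` and `Q ⊗ P ≅ 0`. -/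
theorem complementary_idempotents_tfae {𝒜 : Type*} [Category 𝒜] [MonoidalCategory 𝒜]
    [HasZeroObject 𝒜] [Preadditive 𝒜] [HasShift 𝒜 ℤ]
    [∀ n : ℤ, (shiftFunctor 𝒜 n).Additive] [Pretriangulated 𝒜]
    [∀ X : 𝒜, (tensorLeft X).Additive] [∀ X : 𝒜, (tensorRight X).Additive]
    [∀ X : 𝒜, (tensorLeft X).CommShift ℤ] [∀ X : 𝒜, (tensorRight X).CommShift ℤ]
    [∀ X : 𝒜, (tensorLeft X).IsTriangulated] [∀ X : 𝒜, (tensorRight X).IsTriangulated]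
    (P Q : 𝒜) (ε : P ⟶ 𝟙_ 𝒜) (η : 𝟙_ 𝒜 ⟶ Q) (δ : Q ⟶ P⟦(1 : ℤ)⟧)
    (hT : Triangle.mk ε η δ ∈ distTriang 𝒜) :
    List.TFAE [
      -- (1) (P, ε) is a counital idempotent
      IsIso ((ε ▷ P) ≫ (λ_ P).hom) ∧ IsIso ((P ◁ ε) ≫ (ρ_ P).hom),
      -- (2) (Q, η) is a unital idempotent
      IsIso ((λ_ Q).inv ≫ (η ▷ Q)) ∧ IsIso ((ρ_ Q).inv ≫ (Q ◁ η)),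
      -- (3) P ⊗ Q ≅ 0 and Q ⊗ P ≅ 0
      Nonempty (P ⊗ Q ≅ 0) ∧ Nonempty (Q ⊗ P ≅ 0)] := by
  simp only [nonempty_iso_zero_iff_isZero]
  exact complementary_idempotents_tfae_general hT
end

section
/- Let (P, ε) be a counital idempotent and (Q, η) a unital idempotent in 𝒜 which are complementary, i.e., there is a distinguished triangle P ⟶ε 𝟙 ⟶η Q ⟶ P⟦1⟧. Then for every object X of 𝒜: (i) P ⊗ X ≅ X if and only if Q ⊗ X ≅ 0; (ii) Q ⊗ X ≅ X if and only if P ⊗ X ≅ 0; and the analogous equivalences hold with X on the left: X ⊗ P ≅ X iff X ⊗ Q ≅ 0, and X ⊗ Q ≅ X iff X ⊗ P ≅ 0. -/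
open CategoryTheory Category Limits MonoidalCategory Pretriangulated ZeroObject

/-!
Tensoring the triangle `P ⟶ 𝟙 ⟶ Q` with `P` and with `Q` turns the idempotent conditions into the
orthogonality relations `Q ⊗ P ≅ 0` and `P ⊗ Q ≅ 0`. An isomorphism `P ⊗ X ≅ X` then gives
`Q ⊗ X ≅ Q ⊗ (P ⊗ X) ≅ (Q ⊗ P) ⊗ X ≅ 0`; conversely, if `Q ⊗ X ≅ 0`, then the triangle tensored
with `X` shows that `ε ▷ X : P ⊗ X ⟶ 𝟙 ⊗ X` is an isomorphism. The other equivalences arise by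
exchanging `P` with `Q` and left with right.
-/

theorem isZero_iff_nonempty_iso_zero {C : Type*} [Category* C] [HasZeroObject C] {X : C} :
    IsZero X ↔ Nonempty (X ≅ 0) :=
  ⟨fun hX => ⟨hX.isoZero⟩, fun ⟨e⟩ => (isZero_zero C).of_iso e⟩

section ZeroMorphisms

variable {C : Type*} [Category* C] [MonoidalCategory C] [HasZeroMorphisms C] {A B X : C}

theorem isZero_tensor_of_tensor_iso [(tensorRight X).PreservesZeroMorphisms]
    (hBA : IsZero (B ⊗ A)) (e : A ⊗ X ≅ X) : IsZero (B ⊗ X) :=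
  ((tensorRight X).map_isZero hBA).of_iso (whiskerLeftIso B e.symm ≪≫ (α_ B A X).symm)

theorem isZero_tensor_of_iso_tensor [(tensorLeft X).PreservesZeroMorphisms]
    (hAB : IsZero (A ⊗ B)) (e : X ⊗ A ≅ X) : IsZero (X ⊗ B) :=
  ((tensorLeft X).map_isZero hAB).of_iso (whiskerRightIso e.symm B ≪≫ α_ X A B)

end ZeroMorphisms

section Pretriangulated

variable {C : Type*} [Category* C] [MonoidalCategory C] [HasZeroObject C] [Preadditive C]
  [HasShift C ℤ] [∀ n : ℤ, (shiftFunctor C n).Additive] [Pretriangulated C]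

section WhiskerRight

variable (X : C) [(tensorRight X).CommShift ℤ] [(tensorRight X).IsTriangulated]

theorem isZero_obj₁_tensor_iff_isIso_mor₂_whiskerRight {T : Triangle C} (hT : T ∈ distTriang C) :
    IsZero (T.obj₁ ⊗ X) ↔ IsIso (T.mor₂ ▷ X) :=
  Triangle.isZero₁_iff_isIso₂ _ ((tensorRight X).map_distinguished T hT)

theorem isZero_obj₃_tensor_iff_isIso_mor₁_whiskerRight {T : Triangle C} (hT : T ∈ distTriang C) :
    IsZero (T.obj₃ ⊗ X) ↔ IsIso (T.mor₁ ▷ X) :=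
  Triangle.isZero₃_iff_isIso₁ _ ((tensorRight X).map_distinguished T hT)

variable {P Q : C} {ε : P ⟶ 𝟙_ C} {η : 𝟙_ C ⟶ Q} {δ : Q ⟶ P⟦(1 : ℤ)⟧}

theorem nonempty_tensor_iso_iff_isZero_cofiber_tensor (hT : Triangle.mk ε η δ ∈ distTriang C)
    (hQP : IsZero (Q ⊗ P)) : Nonempty (P ⊗ X ≅ X) ↔ IsZero (Q ⊗ X) := by
  refine ⟨fun ⟨e⟩ => isZero_tensor_of_tensor_iso hQP e, fun hQX => ?_⟩
  have : IsIso (ε ▷ X) := (isZero_obj₃_tensor_iff_isIso_mor₁_whiskerRight X hT).1 hQX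
  exact ⟨asIso (ε ▷ X) ≪≫ λ_ X⟩

theorem nonempty_tensor_iso_iff_isZero_fiber_tensor (hT : Triangle.mk ε η δ ∈ distTriang C)
    (hPQ : IsZero (P ⊗ Q)) : Nonempty (Q ⊗ X ≅ X) ↔ IsZero (P ⊗ X) := by
  refine ⟨fun ⟨e⟩ => isZero_tensor_of_tensor_iso hPQ e, fun hPX => ?_⟩
  have : IsIso (η ▷ X) := (isZero_obj₁_tensor_iff_isIso_mor₂_whiskerRight X hT).1 hPX
  exact ⟨(asIso (η ▷ X)).symm ≪≫ λ_ X⟩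

end WhiskerRight

section WhiskerLeft

variable (X : C) [(tensorLeft X).CommShift ℤ] [(tensorLeft X).IsTriangulated]

theorem isZero_tensor_obj₁_iff_isIso_whiskerLeft_mor₂ {T : Triangle C} (hT : T ∈ distTriang C) :
    IsZero (X ⊗ T.obj₁) ↔ IsIso (X ◁ T.mor₂) :=
  Triangle.isZero₁_iff_isIso₂ _ ((tensorLeft X).map_distinguished T hT)

theorem isZero_tensor_obj₃_iff_isIso_whiskerLeft_mor₁ {T : Triangle C} (hT : T ∈ distTriang C) :
    IsZero (X ⊗ T.obj₃) ↔ IsIso (X ◁ T.mor₁) :=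
  Triangle.isZero₃_iff_isIso₁ _ ((tensorLeft X).map_distinguished T hT)

variable {P Q : C} {ε : P ⟶ 𝟙_ C} {η : 𝟙_ C ⟶ Q} {δ : Q ⟶ P⟦(1 : ℤ)⟧}

theorem nonempty_iso_tensor_iff_isZero_tensor_cofiber (hT : Triangle.mk ε η δ ∈ distTriang C)
    (hPQ : IsZero (P ⊗ Q)) : Nonempty (X ⊗ P ≅ X) ↔ IsZero (X ⊗ Q) := by
  refine ⟨fun ⟨e⟩ => isZero_tensor_of_iso_tensor hPQ e, fun hXQ => ?_⟩
  have : IsIso (X ◁ ε) := (isZero_tensor_obj₃_iff_isIso_whiskerLeft_mor₁ X hT).1 hXQ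
  exact ⟨asIso (X ◁ ε) ≪≫ ρ_ X⟩

theorem nonempty_iso_tensor_iff_isZero_tensor_fiber (hT : Triangle.mk ε η δ ∈ distTriang C)
    (hQP : IsZero (Q ⊗ P)) : Nonempty (X ⊗ Q ≅ X) ↔ IsZero (X ⊗ P) := by
  refine ⟨fun ⟨e⟩ => isZero_tensor_of_iso_tensor hQP e, fun hXP => ?_⟩
  have : IsIso (X ◁ η) := (isZero_tensor_obj₁_iff_isIso_whiskerLeft_mor₂ X hT).1 hXP
  exact ⟨(asIso (X ◁ η)).symm ≪≫ ρ_ X⟩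

end WhiskerLeft

end Pretriangulated

/-- Lemma (properties of complementary idempotents, parts (2) and (3)): if `(P, ε)` is a
counital idempotent and `(Q, η)` a unital idempotent which are complementary, then for every
object `X`: `P ⊗ X ≅ X` iff `Q ⊗ X ≅ 0`; `Q ⊗ X ≅ X` iff `P ⊗ X ≅ 0`; and similarly
with `X` on the left. -/
theorem complementary_idempotents_kill {𝒜 : Type*} [Category 𝒜] [MonoidalCategory 𝒜]
    [HasZeroObject 𝒜] [Preadditive 𝒜] [HasShift 𝒜 ℤ]
    [∀ n : ℤ, (shiftFunctor 𝒜 n).Additive] [Pretriangulated 𝒜]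
    [∀ X : 𝒜, (tensorLeft X).Additive] [∀ X : 𝒜, (tensorRight X).Additive]
    [∀ X : 𝒜, (tensorLeft X).CommShift ℤ] [∀ X : 𝒜, (tensorRight X).CommShift ℤ]
    [∀ X : 𝒜, (tensorLeft X).IsTriangulated] [∀ X : 𝒜, (tensorRight X).IsTriangulated]
    (P Q : 𝒜) (ε : P ⟶ 𝟙_ 𝒜) (η : 𝟙_ 𝒜 ⟶ Q) (δ : Q ⟶ P⟦(1 : ℤ)⟧)
    (hT : Triangle.mk ε η δ ∈ distTriang 𝒜)
    (hP : IsIso ((ε ▷ P) ≫ (λ_ P).hom) ∧ IsIso ((P ◁ ε) ≫ (ρ_ P).hom))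
    (hQ : IsIso ((λ_ Q).inv ≫ (η ▷ Q)) ∧ IsIso ((ρ_ Q).inv ≫ (Q ◁ η))) :
    ∀ X : 𝒜,
      (Nonempty (P ⊗ X ≅ X) ↔ Nonempty (Q ⊗ X ≅ 0)) ∧
      (Nonempty (Q ⊗ X ≅ X) ↔ Nonempty (P ⊗ X ≅ 0)) ∧
      (Nonempty (X ⊗ P ≅ X) ↔ Nonempty (X ⊗ Q ≅ 0)) ∧
      (Nonempty (X ⊗ Q ≅ X) ↔ Nonempty (X ⊗ P ≅ 0)) := by
  have hQP : IsZero (Q ⊗ P) := (isZero_obj₃_tensor_iff_isIso_mor₁_whiskerRight P hT).2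
    ((isIso_comp_right_iff (ε ▷ P) (λ_ P).hom).1 hP.1)
  have hPQ : IsZero (P ⊗ Q) := (isZero_obj₁_tensor_iff_isIso_mor₂_whiskerRight Q hT).2
    ((isIso_comp_left_iff (λ_ Q).inv (η ▷ Q)).1 hQ.1)
  intro X
  simp only [← isZero_iff_nonempty_iso_zero]
  exact ⟨nonempty_tensor_iso_iff_isZero_cofiber_tensor X hT hQP,
    nonempty_tensor_iso_iff_isZero_fiber_tensor X hT hPQ,
    nonempty_iso_tensor_iff_isZero_tensor_cofiber X hT hPQ,
    nonempty_iso_tensor_iff_isZero_tensor_fiber X hT hQP⟩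
end

section
/- Let (P₁, ε₁, Q₁, η₁) and (P₂, ε₂, Q₂, η₂) be two complementary pairs of idempotents in 𝒜, i.e., for i = 1, 2 there is a distinguished triangle Pᵢ ⟶εᵢ 𝟙 ⟶ηᵢ Qᵢ ⟶ Pᵢ⟦1⟧ with (Pᵢ, εᵢ) counital and (Qᵢ, ηᵢ) unital. Then P₁ ⊗ P₂ ≅ P₂ ⊗ P₁ if and only if Q₁ ⊗ Q₂ ≅ Q₂ ⊗ Q₁. -/
open CategoryTheory Category Limits MonoidalCategory Pretriangulated ZeroObject

/-!
Fix a triangle `P ⟶ 𝟙 ⟶ Q ⟶ P⟦1⟧` with `P ⊗ Q` and `Q ⊗ P` zero. Tensoring the triangle with an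
object `X` on both sides displays `X` as a matrix with entries `P X P`, `P X Q`, `Q X P`, `Q X Q`,
and commuting with `P`, or with `Q`, amounts to the vanishing of the off-diagonal entries
`P X Q` and `Q X P`. Hence an object commutes with `P` if and only if it commutes with `Q`; applying
this to both pairs in turn replaces `P₁` by `Q₁` and then `P₂` by `Q₂`.
-/

section Monoidal

variable {𝒜 : Type*} [Category 𝒜] [MonoidalCategory 𝒜]

/-- Orthogonality for the tensor product: both products vanish. The two components of a
complementary pair of idempotents have this property. -/
structure TensorOrthogonal (P Q : 𝒜) : Prop where
  isZero_tensor : IsZero (P ⊗ Q)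
  isZero_tensor_swap : IsZero (Q ⊗ P)

/-- `X` is block diagonal with respect to `P` and `Q` if the off-diagonal blocks `P ⊗ X ⊗ Q` and
`Q ⊗ X ⊗ P` vanish. This is the symmetric condition through which commutation of `X` with `P` is
compared with commutation of `X` with `Q`. -/
structure IsBlockDiagonal (P Q X : 𝒜) : Prop where
  isZero_upper : IsZero ((P ⊗ X) ⊗ Q)
  isZero_lower : IsZero ((Q ⊗ X) ⊗ P)

variable {P Q X : 𝒜}

lemma TensorOrthogonal.symm (h : TensorOrthogonal P Q) : TensorOrthogonal Q P :=
  ⟨h.isZero_tensor_swap, h.isZero_tensor⟩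

lemma IsBlockDiagonal.symm (h : IsBlockDiagonal P Q X) : IsBlockDiagonal Q P X :=
  ⟨h.isZero_lower, h.isZero_upper⟩

lemma TensorOrthogonal.isBlockDiagonal [HasZeroMorphisms 𝒜]
    [(tensorLeft X).PreservesZeroMorphisms] [(tensorRight X).PreservesZeroMorphisms]
    (h : TensorOrthogonal P Q) (e : P ⊗ X ≅ X ⊗ P) : IsBlockDiagonal P Q X where
  isZero_upper :=
    ((tensorLeft X).map_isZero h.isZero_tensor).of_iso (whiskerRightIso e Q ≪≫ α_ X P Q)
  isZero_lower :=
    ((tensorRight X).map_isZero h.isZero_tensor_swap).of_iso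
      (α_ Q X P ≪≫ whiskerLeftIso Q e.symm ≪≫ (α_ Q P X).symm)

end Monoidal

section Pretriangulated

variable {𝒜 : Type*} [Category 𝒜] [MonoidalCategory 𝒜] [HasZeroObject 𝒜] [Preadditive 𝒜]
  [HasShift 𝒜 ℤ] [∀ n : ℤ, (shiftFunctor 𝒜 n).Additive] [Pretriangulated 𝒜]

section Whiskering

variable {A B C : 𝒜} {f : A ⟶ B} {g : B ⟶ C} {h : C ⟶ A⟦(1 : ℤ)⟧}

lemma isZero_tensor_iff_isIso_whiskerLeft_mor₁ (X : 𝒜) [(tensorLeft X).CommShift ℤ]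
    [(tensorLeft X).IsTriangulated] (hT : Triangle.mk f g h ∈ distTriang 𝒜) :
    IsZero (X ⊗ C) ↔ IsIso (X ◁ f) :=
  Triangle.isZero₃_iff_isIso₁ _ ((tensorLeft X).map_distinguished _ hT)

lemma isZero_tensor_iff_isIso_whiskerLeft_mor₂ (X : 𝒜) [(tensorLeft X).CommShift ℤ]
    [(tensorLeft X).IsTriangulated] (hT : Triangle.mk f g h ∈ distTriang 𝒜) :
    IsZero (X ⊗ A) ↔ IsIso (X ◁ g) :=
  Triangle.isZero₁_iff_isIso₂ _ ((tensorLeft X).map_distinguished _ hT)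

lemma isZero_tensor_iff_isIso_mor₁_whiskerRight (X : 𝒜) [(tensorRight X).CommShift ℤ]
    [(tensorRight X).IsTriangulated] (hT : Triangle.mk f g h ∈ distTriang 𝒜) :
    IsZero (C ⊗ X) ↔ IsIso (f ▷ X) :=
  Triangle.isZero₃_iff_isIso₁ _ ((tensorRight X).map_distinguished _ hT)

lemma isZero_tensor_iff_isIso_mor₂_whiskerRight (X : 𝒜) [(tensorRight X).CommShift ℤ]
    [(tensorRight X).IsTriangulated] (hT : Triangle.mk f g h ∈ distTriang 𝒜) :
    IsZero (A ⊗ X) ↔ IsIso (g ▷ X) :=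
  Triangle.isZero₁_iff_isIso₂ _ ((tensorRight X).map_distinguished _ hT)

end Whiskering

variable [∀ X : 𝒜, (tensorLeft X).CommShift ℤ] [∀ X : 𝒜, (tensorRight X).CommShift ℤ]
  [∀ X : 𝒜, (tensorLeft X).IsTriangulated] [∀ X : 𝒜, (tensorRight X).IsTriangulated]
  {P Q X : 𝒜} {ε : P ⟶ 𝟙_ 𝒜} {η : 𝟙_ 𝒜 ⟶ Q} {δ : Q ⟶ P⟦(1 : ℤ)⟧}

lemma tensorOrthogonal_of_isIso_counit (hT : Triangle.mk ε η δ ∈ distTriang 𝒜)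
    (hP : IsIso (ε ▷ P ≫ (λ_ P).hom) ∧ IsIso (P ◁ ε ≫ (ρ_ P).hom)) : TensorOrthogonal P Q where
  isZero_tensor :=
    (isZero_tensor_iff_isIso_whiskerLeft_mor₁ P hT).2 ((isIso_comp_right_iff _ _).1 hP.2)
  isZero_tensor_swap :=
    (isZero_tensor_iff_isIso_mor₁_whiskerRight P hT).2 ((isIso_comp_right_iff _ _).1 hP.1)

lemma IsBlockDiagonal.nonempty_counital_iso (h : IsBlockDiagonal P Q X)
    (hT : Triangle.mk ε η δ ∈ distTriang 𝒜) : Nonempty (P ⊗ X ≅ X ⊗ P) := by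
  have : IsIso ((P ⊗ X) ◁ ε) :=
    (isZero_tensor_iff_isIso_whiskerLeft_mor₁ _ hT).1 h.isZero_upper
  have : IsIso (ε ▷ (X ⊗ P)) :=
    (isZero_tensor_iff_isIso_mor₁_whiskerRight _ hT).1 (h.isZero_lower.of_iso (α_ Q X P).symm)
  exact ⟨calc
    P ⊗ X ≅ (P ⊗ X) ⊗ 𝟙_ 𝒜 := (ρ_ _).symm
    _ ≅ (P ⊗ X) ⊗ P := (asIso ((P ⊗ X) ◁ ε)).symm
    _ ≅ P ⊗ (X ⊗ P) := α_ P X P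
    _ ≅ 𝟙_ 𝒜 ⊗ (X ⊗ P) := asIso (ε ▷ (X ⊗ P))
    _ ≅ X ⊗ P := λ_ _⟩

lemma IsBlockDiagonal.nonempty_unital_iso (h : IsBlockDiagonal P Q X)
    (hT : Triangle.mk ε η δ ∈ distTriang 𝒜) : Nonempty (Q ⊗ X ≅ X ⊗ Q) := by
  have : IsIso ((Q ⊗ X) ◁ η) :=
    (isZero_tensor_iff_isIso_whiskerLeft_mor₂ _ hT).1 h.isZero_lower
  have : IsIso (η ▷ (X ⊗ Q)) :=
    (isZero_tensor_iff_isIso_mor₂_whiskerRight _ hT).1 (h.isZero_upper.of_iso (α_ P X Q).symm)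
  exact ⟨calc
    Q ⊗ X ≅ (Q ⊗ X) ⊗ 𝟙_ 𝒜 := (ρ_ _).symm
    _ ≅ (Q ⊗ X) ⊗ Q := asIso ((Q ⊗ X) ◁ η)
    _ ≅ Q ⊗ (X ⊗ Q) := α_ Q X Q
    _ ≅ 𝟙_ 𝒜 ⊗ (X ⊗ Q) := (asIso (η ▷ (X ⊗ Q))).symm
    _ ≅ X ⊗ Q := λ_ _⟩

lemma TensorOrthogonal.nonempty_counital_iso_iff_nonempty_unital_iso (h : TensorOrthogonal P Q)
    (hT : Triangle.mk ε η δ ∈ distTriang 𝒜) (X : 𝒜) :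
    Nonempty (P ⊗ X ≅ X ⊗ P) ↔ Nonempty (Q ⊗ X ≅ X ⊗ Q) where
  mp := fun ⟨e⟩ ↦ (h.isBlockDiagonal e).nonempty_unital_iso hT
  mpr := fun ⟨e⟩ ↦ (h.symm.isBlockDiagonal e).symm.nonempty_counital_iso hT

end Pretriangulated

/-- Lemma (properties of complementary idempotents, part (5)): given two complementary pairs
of idempotents `(Pᵢ, εᵢ, Qᵢ, ηᵢ)`, we have `P₁ ⊗ P₂ ≅ P₂ ⊗ P₁` iff `Q₁ ⊗ Q₂ ≅ Q₂ ⊗ Q₁`. -/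
theorem complementary_idempotents_commute_iff {𝒜 : Type*} [Category 𝒜] [MonoidalCategory 𝒜]
    [HasZeroObject 𝒜] [Preadditive 𝒜] [HasShift 𝒜 ℤ]
    [∀ n : ℤ, (shiftFunctor 𝒜 n).Additive] [Pretriangulated 𝒜]
    [∀ X : 𝒜, (tensorLeft X).Additive] [∀ X : 𝒜, (tensorRight X).Additive]
    [∀ X : 𝒜, (tensorLeft X).CommShift ℤ] [∀ X : 𝒜, (tensorRight X).CommShift ℤ]
    [∀ X : 𝒜, (tensorLeft X).IsTriangulated] [∀ X : 𝒜, (tensorRight X).IsTriangulated]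
    (P₁ Q₁ P₂ Q₂ : 𝒜) (ε₁ : P₁ ⟶ 𝟙_ 𝒜) (η₁ : 𝟙_ 𝒜 ⟶ Q₁) (δ₁ : Q₁ ⟶ P₁⟦(1 : ℤ)⟧)
    (ε₂ : P₂ ⟶ 𝟙_ 𝒜) (η₂ : 𝟙_ 𝒜 ⟶ Q₂) (δ₂ : Q₂ ⟶ P₂⟦(1 : ℤ)⟧)
    (hT₁ : Triangle.mk ε₁ η₁ δ₁ ∈ distTriang 𝒜)
    (hT₂ : Triangle.mk ε₂ η₂ δ₂ ∈ distTriang 𝒜)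
    (hP₁ : IsIso ((ε₁ ▷ P₁) ≫ (λ_ P₁).hom) ∧ IsIso ((P₁ ◁ ε₁) ≫ (ρ_ P₁).hom))
    (hP₂ : IsIso ((ε₂ ▷ P₂) ≫ (λ_ P₂).hom) ∧ IsIso ((P₂ ◁ ε₂) ≫ (ρ_ P₂).hom))
    (hQ₁ : IsIso ((λ_ Q₁).inv ≫ (η₁ ▷ Q₁)) ∧ IsIso ((ρ_ Q₁).inv ≫ (Q₁ ◁ η₁)))
    (hQ₂ : IsIso ((λ_ Q₂).inv ≫ (η₂ ▷ Q₂)) ∧ IsIso ((ρ_ Q₂).inv ≫ (Q₂ ◁ η₂))) :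
    Nonempty (P₁ ⊗ P₂ ≅ P₂ ⊗ P₁) ↔ Nonempty (Q₁ ⊗ Q₂ ≅ Q₂ ⊗ Q₁) := by
  have h₁ := tensorOrthogonal_of_isIso_counit hT₁ hP₁
  have h₂ := tensorOrthogonal_of_isIso_counit hT₂ hP₂
  calc Nonempty (P₁ ⊗ P₂ ≅ P₂ ⊗ P₁)
    _ ↔ Nonempty (Q₁ ⊗ P₂ ≅ P₂ ⊗ Q₁) := h₁.nonempty_counital_iso_iff_nonempty_unital_iso hT₁ P₂
    _ ↔ Nonempty (P₂ ⊗ Q₁ ≅ Q₁ ⊗ P₂) := Iso.nonempty_iso_symm _ _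
    _ ↔ Nonempty (Q₂ ⊗ Q₁ ≅ Q₁ ⊗ Q₂) := h₂.nonempty_counital_iso_iff_nonempty_unital_iso hT₂ Q₁
    _ ↔ Nonempty (Q₁ ⊗ Q₂ ≅ Q₂ ⊗ Q₁) := Iso.nonempty_iso_symm _ _
end

section
/- Let (P₁, ε₁) and (P₂, ε₂) be counital idempotents in 𝒜. The following are equivalent: (1) there exists a morphism θ : P₁ ⟶ P₂ with θ ≫ ε₂ = ε₁ (equivalently, P₁ is a retract of X ⊗ P₂ for some object X); (2) P₁ ⊗ P₂ ≅ P₁; (3) P₂ ⊗ P₁ ≅ P₁. -/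
open CategoryTheory Category Limits MonoidalCategory Pretriangulated ZeroObject

/-!
A morphism `θ : P₁ ⟶ P₂` over the unit makes the inverse of `P₁ ⊗ P₁ ⟶ P₁`, followed by `P₁ ◁ θ`,
a section of `P₁ ⊗ P₂ ⟶ P₁`, so `P₁` is a retract of `P₁ ⊗ P₂`. Now `- ◁ ε₂` is invertible at every
object `Z ⊗ P₂`, hence at every retract of such an object, because a natural transformation takes
retracts of objects to retracts of arrows. So `P₁ ⊗ P₂ ⟶ P₁` is invertible, and only an abstract
isomorphism `P₁ ⊗ P₂ ≅ P₁` is needed to conclude this. Conversely, the inverse of this map followed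
by `ε₁ ▷ P₂` is a morphism `P₁ ⟶ P₂` over the unit. The statements about `P₂ ⊗ P₁` are the same ones
in the monoidal opposite.
-/

section

variable {C : Type*} [Category C] [MonoidalCategory C]

lemma isIso_whiskerLeft_of_retract {X Y A B : C} (r : Retract X Y) (f : A ⟶ B)
    [hf : IsIso (Y ◁ f)] : IsIso (X ◁ f) :=
  MorphismProperty.of_retract (P := .isomorphisms C)
    (((tensoringRight C).map f).retractArrowApp r) hf

lemma isIso_tensor_whiskerLeft (Z : C) {X A B : C} (f : A ⟶ B) [IsIso (X ◁ f)] :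
    IsIso ((Z ⊗ X) ◁ f) := by
  rw [tensor_whiskerLeft]
  infer_instance

lemma isIso_whiskerLeft_tfae {P : C} (ε : P ⟶ 𝟙_ C) [IsIso (P ◁ ε)] (X : C) :
    List.TFAE [
      IsIso (X ◁ ε),
      Nonempty (X ⊗ P ≅ X),
      ∃ Z : C, Nonempty (Retract X (Z ⊗ P))] := by
  tfae_have 1 → 2 := fun _ ↦ ⟨asIso (X ◁ ε) ≪≫ ρ_ X⟩
  tfae_have 2 → 3 := fun ⟨e⟩ ↦ ⟨X, ⟨e.symm.retract⟩⟩
  tfae_have 3 → 1 := fun ⟨Z, ⟨r⟩⟩ ↦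
    have := isIso_tensor_whiskerLeft Z ε (X := P)
    isIso_whiskerLeft_of_retract r ε
  tfae_finish

lemma exists_comp_eq_of_isIso_whiskerLeft {X P : C} (f : X ⟶ 𝟙_ C) (ε : P ⟶ 𝟙_ C)
    [IsIso (X ◁ ε)] : ∃ θ : X ⟶ P, θ ≫ ε = f := by
  have square : (f ▷ P ≫ (λ_ P).hom) ≫ ε = (X ◁ ε ≫ (ρ_ X).hom) ≫ f := by
    rw [assoc, assoc, ← leftUnitor_naturality, ← rightUnitor_naturality,
      whisker_exchange_assoc, unitors_equal]
  exact ⟨inv (X ◁ ε ≫ (ρ_ X).hom) ≫ f ▷ P ≫ (λ_ P).hom, by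
    rw [assoc, square, IsIso.inv_hom_id_assoc]⟩

lemma nonempty_retract_tensor_of_comp_eq {X P : C} {f : X ⟶ 𝟙_ C} {ε : P ⟶ 𝟙_ C}
    [IsIso (X ◁ f)] {θ : X ⟶ P} (hθ : θ ≫ ε = f) : Nonempty (Retract X (X ⊗ P)) :=
  ⟨{ i := inv (X ◁ f ≫ (ρ_ X).hom) ≫ X ◁ θ
     r := X ◁ ε ≫ (ρ_ X).hom
     retract := by rw [assoc, ← whiskerLeft_comp_assoc, hθ, IsIso.inv_hom_id] }⟩

theorem exists_comp_eq_iff_nonempty_tensor_right_iso {X P : C} (f : X ⟶ 𝟙_ C) (ε : P ⟶ 𝟙_ C)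
    [IsIso (X ◁ f)] [IsIso (P ◁ ε)] :
    (∃ θ : X ⟶ P, θ ≫ ε = f) ↔ Nonempty (X ⊗ P ≅ X) := by
  have tfae := isIso_whiskerLeft_tfae ε X
  constructor
  · rintro ⟨θ, hθ⟩
    have retract : ∃ Z : C, Nonempty (Retract X (Z ⊗ P)) :=
      ⟨X, nonempty_retract_tensor_of_comp_eq hθ⟩
    exact (tfae.out 2 1).1 retract
  · intro e
    have : IsIso (X ◁ ε) := (tfae.out 1 0).1 e
    exact exists_comp_eq_of_isIso_whiskerLeft f ε

theorem exists_comp_eq_iff_nonempty_tensor_left_iso {X P : C} (f : X ⟶ 𝟙_ C) (ε : P ⟶ 𝟙_ C)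
    [IsIso (f ▷ X)] [IsIso (ε ▷ P)] :
    (∃ θ : X ⟶ P, θ ≫ ε = f) ↔ Nonempty (P ⊗ X ≅ X) := by
  have : IsIso (MonoidalOpposite.mop X ◁ f.mop) := inferInstanceAs (IsIso (f ▷ X).mop)
  have : IsIso (MonoidalOpposite.mop P ◁ ε.mop) := inferInstanceAs (IsIso (ε ▷ P).mop)
  have key := exists_comp_eq_iff_nonempty_tensor_right_iso (C := Cᴹᵒᵖ) f.mop ε.mop
  constructor
  · rintro ⟨θ, hθ⟩
    exact (key.1 ⟨θ.mop, congrArg (·.mop) hθ⟩).map (·.unmop)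
  · rintro ⟨e⟩
    obtain ⟨θ, hθ⟩ := key.2 ⟨e.mop⟩
    exact ⟨θ.unmop, congrArg (·.unmop) hθ⟩

/-- `(P, ε)` is a counital idempotent, that is, both maps `P ⊗ P ⟶ P` induced by `ε` are
isomorphisms. The unitors through which these maps are defined are left out, being invertible. -/
structure IsCounitalIdempotent_s5 {P : C} (ε : P ⟶ 𝟙_ C) : Prop where
  isIso_whiskerRight : IsIso (ε ▷ P)
  isIso_whiskerLeft : IsIso (P ◁ ε)

lemma isCounitalIdempotent_iff {P : C} {ε : P ⟶ 𝟙_ C} :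
    IsCounitalIdempotent_s5 ε ↔
      IsIso (ε ▷ P ≫ (λ_ P).hom) ∧ IsIso (P ◁ ε ≫ (ρ_ P).hom) := by
  rw [isIso_comp_right_iff, isIso_comp_right_iff]
  exact ⟨fun ⟨hr, hl⟩ ↦ ⟨hr, hl⟩, fun ⟨hr, hl⟩ ↦ ⟨hr, hl⟩⟩

theorem counital_idempotent_order_tfae_general {P₁ P₂ : C} {ε₁ : P₁ ⟶ 𝟙_ C} {ε₂ : P₂ ⟶ 𝟙_ C}
    (h₁ : IsCounitalIdempotent_s5 ε₁) (h₂ : IsCounitalIdempotent_s5 ε₂) :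
    List.TFAE [
      ∃ θ : P₁ ⟶ P₂, θ ≫ ε₂ = ε₁,
      Nonempty (P₁ ⊗ P₂ ≅ P₁),
      Nonempty (P₂ ⊗ P₁ ≅ P₁)] := by
  obtain ⟨_, _⟩ := h₁
  obtain ⟨_, _⟩ := h₂
  tfae_have 1 ↔ 2 := exists_comp_eq_iff_nonempty_tensor_right_iso ε₁ ε₂
  tfae_have 1 ↔ 3 := exists_comp_eq_iff_nonempty_tensor_left_iso ε₁ ε₂
  tfae_finish

end

/-- Theorem (partial order on counital idempotents): for counital idempotents `(P₁, ε₁)` and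
`(P₂, ε₂)` the following are equivalent: (1) there is `θ : P₁ ⟶ P₂` with `θ ≫ ε₂ = ε₁`;
(2) `P₁ ⊗ P₂ ≅ P₁`; (3) `P₂ ⊗ P₁ ≅ P₁`. -/
theorem counital_idempotent_order_tfae {𝒜 : Type*} [Category 𝒜] [MonoidalCategory 𝒜]
    [HasZeroObject 𝒜] [Preadditive 𝒜] [HasShift 𝒜 ℤ]
    [∀ n : ℤ, (shiftFunctor 𝒜 n).Additive] [Pretriangulated 𝒜]
    [∀ X : 𝒜, (tensorLeft X).Additive] [∀ X : 𝒜, (tensorRight X).Additive]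
    [∀ X : 𝒜, (tensorLeft X).CommShift ℤ] [∀ X : 𝒜, (tensorRight X).CommShift ℤ]
    [∀ X : 𝒜, (tensorLeft X).IsTriangulated] [∀ X : 𝒜, (tensorRight X).IsTriangulated]
    (P₁ P₂ : 𝒜) (ε₁ : P₁ ⟶ 𝟙_ 𝒜) (ε₂ : P₂ ⟶ 𝟙_ 𝒜)
    (hP₁ : IsIso ((ε₁ ▷ P₁) ≫ (λ_ P₁).hom) ∧ IsIso ((P₁ ◁ ε₁) ≫ (ρ_ P₁).hom))
    (hP₂ : IsIso ((ε₂ ▷ P₂) ≫ (λ_ P₂).hom) ∧ IsIso ((P₂ ◁ ε₂) ≫ (ρ_ P₂).hom)) :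
    List.TFAE [
      ∃ θ : P₁ ⟶ P₂, θ ≫ ε₂ = ε₁,
      Nonempty (P₁ ⊗ P₂ ≅ P₁),
      Nonempty (P₂ ⊗ P₁ ≅ P₁)] := by
  exact counital_idempotent_order_tfae_general (isCounitalIdempotent_iff.2 hP₁)
    (isCounitalIdempotent_iff.2 hP₂)
end

section
/- Let (P, ε) be a counital idempotent in 𝒜. For an object M of 𝒜 the following are equivalent: (1) M is a retract of some object M' satisfying M' ⊗ P ≅ M'; (2) the morphism (M ◁ ε) ≫ ρ_M : M ⊗ P ⟶ M is an isomorphism; (3) M ⊗ P ≅ M. -/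
open CategoryTheory Category Limits MonoidalCategory Pretriangulated ZeroObject

/-! The maps `(M ◁ ε) ≫ ρ_M` are the components of a natural transformation from `- ⊗ P` to the
identity, and idempotence of `P` makes the component at every object `X ⊗ P` invertible. The objects
at which a natural transformation is invertible are closed under retracts, and a retract of
`M' ≅ M' ⊗ P` is a retract of `M' ⊗ P`. -/

section Retracts

variable {C D : Type*} [Category C] [Category D]

theorem nonempty_retract_iff {X Y : C} :
    Nonempty (Retract X Y) ↔ ∃ (i : X ⟶ Y) (r : Y ⟶ X), i ≫ r = 𝟙 X :=
  ⟨fun ⟨h⟩ => ⟨h.i, h.r, h.retract⟩, fun ⟨i, r, h⟩ => ⟨⟨i, r, h⟩⟩⟩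

/-- The image of a retract under `τ`, regarded as a functor to the arrow category. -/
def retractArrowApp {F G : C ⥤ D} (τ : F ⟶ G) {X Y : C} (h : Retract X Y) :
    RetractArrow (τ.app X) (τ.app Y) where
  i := Arrow.homMk (F.map h.i) (G.map h.i)
  r := Arrow.homMk (F.map h.r) (G.map h.r)
  retract := by ext <;> simp [← Functor.map_comp]

theorem isIso_app_of_retract {F G : C ⥤ D} (τ : F ⟶ G) {X Y : C} (h : Retract X Y)
    [hY : IsIso (τ.app Y)] : IsIso (τ.app X) :=
  MorphismProperty.of_retract (P := .isomorphisms D) (retractArrowApp τ h) hY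

theorem tfae_isIso_app_of_isIso_app_obj {T : C ⥤ C} (ε : T ⟶ 𝟭 C)
    [∀ X, IsIso (ε.app (T.obj X))] (M : C) :
    List.TFAE [
      ∃ M', Nonempty (T.obj M' ≅ M') ∧ Nonempty (Retract M M'),
      IsIso (ε.app M),
      Nonempty (T.obj M ≅ M)] := by
  tfae_have 1 → 2 := fun ⟨_, ⟨e⟩, ⟨h⟩⟩ => isIso_app_of_retract ε (h.trans e.symm.retract)
  tfae_have 2 → 3 := fun _ => ⟨asIso (ε.app M)⟩
  tfae_have 3 → 1 := fun h => ⟨M, h, ⟨Retract.refl M⟩⟩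
  tfae_finish

end Retracts

section Monoidal

variable {C : Type*} [Category C] [MonoidalCategory C] {P : C}

/-- The natural transformation from `- ⊗ P` to the identity functor induced by a
counit `ε : P ⟶ 𝟙_ C`. -/
@[simps!]
def tensorRightCounit (ε : P ⟶ 𝟙_ C) : tensorRight P ⟶ 𝟭 C :=
  (tensoringRight C).map ε ≫ (rightUnitorNatIso C).hom

theorem tensor_whiskerLeft_comp_rightUnitor_hom (ε : P ⟶ 𝟙_ C) (X Y : C) :
    ((X ⊗ Y) ◁ ε) ≫ (ρ_ (X ⊗ Y)).hom = (α_ X Y P).hom ≫ X ◁ ((Y ◁ ε) ≫ (ρ_ Y).hom) := by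
  simp

theorem isIso_tensor_whiskerLeft_comp_rightUnitor_hom (ε : P ⟶ 𝟙_ C) (X Y : C)
    [IsIso ((Y ◁ ε) ≫ (ρ_ Y).hom)] : IsIso (((X ⊗ Y) ◁ ε) ≫ (ρ_ (X ⊗ Y)).hom) := by
  rw [tensor_whiskerLeft_comp_rightUnitor_hom]
  infer_instance

theorem im_counital_idempotent_tfae_general (ε : P ⟶ 𝟙_ C)
    (hP : IsIso ((P ◁ ε) ≫ (ρ_ P).hom)) (M : C) :
    List.TFAE [
      ∃ (M' : C) (_ : Nonempty (M' ⊗ P ≅ M')) (i : M ⟶ M') (r : M' ⟶ M), i ≫ r = 𝟙 M,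
      IsIso ((M ◁ ε) ≫ (ρ_ M).hom),
      Nonempty (M ⊗ P ≅ M)] := by
  have isIso_app_tensor (X : C) : IsIso ((tensorRightCounit ε).app ((tensorRight P).obj X)) :=
    isIso_tensor_whiskerLeft_comp_rightUnitor_hom ε X P
  simpa [nonempty_retract_iff] using tfae_isIso_app_of_isIso_app_obj (tensorRightCounit ε) M

end Monoidal

/-- Lemma (characterization of `im P`): for a counital idempotent `(P, ε)` and an object `M`,
the following are equivalent: (1) `M` is a retract of an object `M'` with `M' ⊗ P ≅ M'`;
(2) `(M ◁ ε) ≫ ρ_M : M ⊗ P ⟶ M` is an isomorphism; (3) `M ⊗ P ≅ M`. -/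
theorem im_counital_idempotent_tfae {𝒜 : Type*} [Category 𝒜] [MonoidalCategory 𝒜]
    [HasZeroObject 𝒜] [Preadditive 𝒜] [HasShift 𝒜 ℤ]
    [∀ n : ℤ, (shiftFunctor 𝒜 n).Additive] [Pretriangulated 𝒜]
    [∀ X : 𝒜, (tensorLeft X).Additive] [∀ X : 𝒜, (tensorRight X).Additive]
    [∀ X : 𝒜, (tensorLeft X).CommShift ℤ] [∀ X : 𝒜, (tensorRight X).CommShift ℤ]
    [∀ X : 𝒜, (tensorLeft X).IsTriangulated] [∀ X : 𝒜, (tensorRight X).IsTriangulated]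
    (P : 𝒜) (ε : P ⟶ 𝟙_ 𝒜)
    (hP : IsIso ((ε ▷ P) ≫ (λ_ P).hom) ∧ IsIso ((P ◁ ε) ≫ (ρ_ P).hom))
    (M : 𝒜) :
    List.TFAE [
      ∃ (M' : 𝒜) (_ : Nonempty (M' ⊗ P ≅ M')) (i : M ⟶ M') (r : M' ⟶ M), i ≫ r = 𝟙 M,
      IsIso ((M ◁ ε) ≫ (ρ_ M).hom),
      Nonempty (M ⊗ P ≅ M)] :=
  im_counital_idempotent_tfae_general ε hP.2 M
end

section
/- Let (P₁, ε₁) and (P₂, ε₂) be counital idempotents in 𝒜 with P₁ ≤ P₂, i.e., P₁ ⊗ P₂ ≅ P₁. Then there exists exactly one morphism θ : P₁ ⟶ P₂ satisfying θ ≫ ε₂ = ε₁. -/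
open CategoryTheory Category Limits MonoidalCategory Pretriangulated ZeroObject

/-!
If the two contractions `P ⊗ P ⟶ P` induced by `ε` agree, then contracting `f ▷ P` for `f : X ⟶ P`
gives `X ◁ ε` followed by `f` on one side and depends only on `f ≫ ε` on the other, so `f` is
determined by `f ≫ ε` once `X ◁ ε` is invertible. The contractions do agree: they have the same
composite with `ε`, and the only endomorphism `u` of `P` with `u ≫ ε = ε` is the identity.
-/

section CounitalIdempotent

variable {C : Type*} [Category C] [MonoidalCategory C] {P X : C} {ε : P ⟶ 𝟙_ C}

/-- A morphism `ε : P ⟶ 𝟙` is the counit of a counital idempotent if both induced contractions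
`P ⊗ P ⟶ P` are isomorphisms. It is encoded as a property of `ε`. -/
structure IsCounitalIdempotent_s9 (ε : P ⟶ 𝟙_ C) : Prop where
  isIso_leftContraction : IsIso ((ε ▷ P) ≫ (λ_ P).hom)
  isIso_rightContraction : IsIso ((P ◁ ε) ≫ (ρ_ P).hom)

lemma whiskerRight_leftUnitor_comp_eq (δ : X ⟶ 𝟙_ C) (ε : P ⟶ 𝟙_ C) :
    (δ ▷ P) ≫ (λ_ P).hom ≫ ε = (X ◁ ε) ≫ (ρ_ X).hom ≫ δ := by
  rw [← leftUnitor_naturality, ← whisker_exchange_assoc, unitors_equal, rightUnitor_naturality]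

lemma isIso_whiskerLeft_of_tensor_iso {Y Q R : C} (f : Q ⟶ R) [IsIso (P ◁ f)]
    (e : Y ⊗ P ≅ X) : IsIso (X ◁ f) := by
  have h_tensor : IsIso ((Y ⊗ P) ◁ f) := by
    rw [tensor_whiskerLeft]
    infer_instance
  have h_conj : X ◁ f = (e.inv ▷ Q) ≫ ((Y ⊗ P) ◁ f) ≫ (e.hom ▷ R) := by
    rw [whisker_exchange, inv_hom_whiskerRight_assoc]
  rw [h_conj]
  infer_instance

namespace IsCounitalIdempotent_s9

lemma isIso_whiskerLeft (h : IsCounitalIdempotent_s9 ε) : IsIso (P ◁ ε) :=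
  have := h.isIso_rightContraction
  IsIso.of_isIso_comp_right _ (ρ_ P).hom

lemma eq_id_of_comp_counit_eq (h : IsCounitalIdempotent_s9 ε) {u : P ⟶ P} (hu : u ≫ ε = ε) :
    u = 𝟙 P := by
  have := h.isIso_leftContraction
  have := h.isIso_whiskerLeft
  have h_whisker : P ◁ u = 𝟙 (P ⊗ P) := by
    rw [← cancel_mono (P ◁ ε), ← whiskerLeft_comp, hu, id_comp]
  rw [← cancel_epi ((ε ▷ P) ≫ (λ_ P).hom)]
  calc ((ε ▷ P) ≫ (λ_ P).hom) ≫ u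
      = (P ◁ u) ≫ (ε ▷ P) ≫ (λ_ P).hom := by
        rw [assoc, ← leftUnitor_naturality, whisker_exchange_assoc]
    _ = ((ε ▷ P) ≫ (λ_ P).hom) ≫ 𝟙 P := by rw [h_whisker, id_comp, comp_id]

lemma leftContraction_eq_rightContraction (h : IsCounitalIdempotent_s9 ε) :
    (ε ▷ P) ≫ (λ_ P).hom = (P ◁ ε) ≫ (ρ_ P).hom := by
  have := h.isIso_leftContraction
  have h_over : (inv ((ε ▷ P) ≫ (λ_ P).hom) ≫ (P ◁ ε) ≫ (ρ_ P).hom) ≫ ε = ε := by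
    rw [assoc, assoc, ← whiskerRight_leftUnitor_comp_eq, IsIso.inv_comp_eq, assoc]
  have h_id := h.eq_id_of_comp_counit_eq h_over
  rw [IsIso.inv_comp_eq, comp_id] at h_id
  exact h_id.symm

end IsCounitalIdempotent_s9

/-- The factorization of `δ : X ⟶ 𝟙` through `ε : P ⟶ 𝟙`, for `X` absorbing `P` in the sense that
`X ◁ ε` is invertible: the composite `X ≅ X ⊗ 𝟙 ≅ X ⊗ P ⟶ 𝟙 ⊗ P ≅ P`. -/
noncomputable def counitLift (ε : P ⟶ 𝟙_ C) [IsIso (X ◁ ε)] (δ : X ⟶ 𝟙_ C) : X ⟶ P :=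
  (ρ_ X).inv ≫ inv (X ◁ ε) ≫ (δ ▷ P) ≫ (λ_ P).hom

lemma counitLift_comp (ε : P ⟶ 𝟙_ C) [IsIso (X ◁ ε)] (δ : X ⟶ 𝟙_ C) :
    counitLift ε δ ≫ ε = δ := by
  simp only [counitLift, assoc, whiskerRight_leftUnitor_comp_eq, IsIso.inv_hom_id_assoc,
    Iso.inv_hom_id_assoc]

lemma IsCounitalIdempotent_s9.eq_counitLift (h : IsCounitalIdempotent_s9 ε) [IsIso (X ◁ ε)]
    (f : X ⟶ P) : f = counitLift ε (f ≫ ε) := by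
  have h_contract : (X ◁ ε) ≫ (ρ_ X).hom ≫ f = ((f ≫ ε) ▷ P) ≫ (λ_ P).hom :=
    calc (X ◁ ε) ≫ (ρ_ X).hom ≫ f
        = (f ▷ P) ≫ (P ◁ ε) ≫ (ρ_ P).hom := by
          rw [← rightUnitor_naturality, whisker_exchange_assoc]
      _ = (f ▷ P) ≫ (ε ▷ P) ≫ (λ_ P).hom := by rw [h.leftContraction_eq_rightContraction]
      _ = ((f ≫ ε) ▷ P) ≫ (λ_ P).hom := by rw [comp_whiskerRight_assoc]
  rw [counitLift, ← h_contract, IsIso.inv_hom_id_assoc, Iso.inv_hom_id_assoc]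

theorem counital_idempotent_unique_comparison_general (h : IsCounitalIdempotent_s9 ε)
    (hle : Nonempty (X ⊗ P ≅ X)) (δ : X ⟶ 𝟙_ C) : ∃! θ : X ⟶ P, θ ≫ ε = δ := by
  obtain ⟨e⟩ := hle
  have := h.isIso_whiskerLeft
  have := isIso_whiskerLeft_of_tensor_iso ε e
  refine ⟨counitLift ε δ, counitLift_comp ε δ, fun θ hθ ↦ ?_⟩
  rw [h.eq_counitLift θ, hθ]

end CounitalIdempotent

/-- Corollary (canonicity): if `(P₁, ε₁)` and `(P₂, ε₂)` are counital idempotents with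
`P₁ ≤ P₂` (i.e. `P₁ ⊗ P₂ ≅ P₁`), then there is exactly one morphism `θ : P₁ ⟶ P₂` with
`θ ≫ ε₂ = ε₁`. -/
theorem counital_idempotent_unique_comparison {𝒜 : Type*} [Category 𝒜] [MonoidalCategory 𝒜]
    [HasZeroObject 𝒜] [Preadditive 𝒜] [HasShift 𝒜 ℤ]
    [∀ n : ℤ, (shiftFunctor 𝒜 n).Additive] [Pretriangulated 𝒜]
    [∀ X : 𝒜, (tensorLeft X).Additive] [∀ X : 𝒜, (tensorRight X).Additive]
    [∀ X : 𝒜, (tensorLeft X).CommShift ℤ] [∀ X : 𝒜, (tensorRight X).CommShift ℤ]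
    [∀ X : 𝒜, (tensorLeft X).IsTriangulated] [∀ X : 𝒜, (tensorRight X).IsTriangulated]
    (P₁ P₂ : 𝒜) (ε₁ : P₁ ⟶ 𝟙_ 𝒜) (ε₂ : P₂ ⟶ 𝟙_ 𝒜)
    (hP₁ : IsIso ((ε₁ ▷ P₁) ≫ (λ_ P₁).hom) ∧ IsIso ((P₁ ◁ ε₁) ≫ (ρ_ P₁).hom))
    (hP₂ : IsIso ((ε₂ ▷ P₂) ≫ (λ_ P₂).hom) ∧ IsIso ((P₂ ◁ ε₂) ≫ (ρ_ P₂).hom))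
    (hle : Nonempty (P₁ ⊗ P₂ ≅ P₁)) :
    ∃! θ : P₁ ⟶ P₂, θ ≫ ε₂ = ε₁ :=
  counital_idempotent_unique_comparison_general ⟨hP₂.1, hP₂.2⟩ hle ε₁
end

section
/- The following identity of integers holds: Σ_{v=0}^{s} (s+1−v)·l_v − Σ_{u=0}^{r} (r+1−u)·k_u = C(N+1, 2) + Σ_{u=0}^{r} (r−u)·n_u + Σ_{0≤u≤u'≤r} k_u·n_{u'}, where C(N+1,2) = (N+1)N/2 is the binomial coefficient. -/
open Finset

/-!
Subtract from `l` the constant sequence of its inserted value (here `1`). What remains is supported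
on the positions `p(u)`, where the weight `s + 1 - p(u) = (r + 1 - u) + n_u + ⋯ + n_r` splits into
the weight of `k_u` in `σ(k)` and a part that gives the double sum. The constant sequence itself
contributes triangular numbers, and `C(a + b, 2) = C(a, 2) + C(b, 2) + a b` separates `C(N + 1, 2)`
from them.
-/

theorem add_choose_two (a b : ℕ) : (a + b).choose 2 = a.choose 2 + b.choose 2 + a * b := by
  induction b with
  | zero => simp
  | succ b ih =>
    rw [← add_assoc, Nat.choose_succ_succ', Nat.choose_succ_succ' b, Nat.choose_one_right,
      Nat.choose_one_right, ih]
    ring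

theorem sum_range_sub_cast (m : ℕ) :
    ∑ v ∈ range m, ((m : ℤ) - v) = ((m + 1).choose 2 : ℤ) := by
  induction m with
  | zero => simp
  | succ m ih =>
    rw [sum_range_succ', Nat.choose_succ_succ', Nat.choose_one_right]
    simp only [Nat.cast_add, Nat.cast_one, add_sub_add_right_eq_sub, Nat.cast_zero, sub_zero, ih]
    ring

/-- The position `p(u)` of the `u`-th original entry in the expanded sequence, where `n i` new
entries have been inserted directly after the `i`-th one. -/
def blockStart (n : ℕ → ℕ) (u : ℕ) : ℕ :=
  u + ∑ i ∈ range u, n i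

theorem blockStart_strictMono (n : ℕ → ℕ) : StrictMono (blockStart n) :=
  strictMono_id.add_monotone fun _ _ h ↦ sum_le_sum_of_subset (range_mono h)

theorem blockStart_sub_blockStart (n : ℕ → ℕ) {u m : ℕ} (hum : u ≤ m) :
    (blockStart n m : ℤ) - blockStart n u = (m - u) + ∑ j ∈ Ico u m, (n j : ℤ) := by
  rw [sum_Ico_eq_sub _ hum]
  simp only [blockStart, Nat.cast_add, Nat.cast_sum]
  ring

theorem blockStart_succ_choose_two (n : ℕ → ℕ) (m : ℕ) :
    ((blockStart n m + 1).choose 2 : ℤ) = (m + 1).choose 2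
      + ((∑ j ∈ range m, n j + 1).choose 2 + ∑ j ∈ range m, ((m : ℤ) - 1 - j) * n j)
      + ∑ j ∈ range m, ((j : ℤ) + 1) * n j := by
  have weights : ∑ j ∈ range m, ((m : ℤ) - 1 - j) * n j + ∑ j ∈ range m, ((j : ℤ) + 1) * n j
      = m * ∑ j ∈ range m, (n j : ℤ) := by
    rw [← sum_add_distrib, mul_sum]
    exact sum_congr rfl fun j _ ↦ by ring
  rw [blockStart, add_assoc, add_choose_two, add_choose_two m 1]
  push_cast [Nat.choose_succ_self 1] at weights ⊢
  linear_combination -weights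

section BarSign

variable {M : Type*} [AddCommGroup M]

/-- The sign exponent `σ(x₀, …, x_m) = ∑_{v < m} (m - v) x_v` of the bar complex. The last entry
`x_m` has coefficient zero and is left out of the sum. -/
def barSign (m : ℕ) (x : ℕ → M) : M :=
  ∑ v ∈ range m, ((m : ℤ) - v) • x v

theorem barSign_congr {m : ℕ} {x y : ℕ → M} (h : ∀ v < m, x v = y v) :
    barSign m x = barSign m y :=
  sum_congr rfl fun v hv ↦ by rw [h v (mem_range.mp hv)]

theorem barSign_sub (m : ℕ) (x y : ℕ → M) : barSign m (x - y) = barSign m x - barSign m y := by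
  simp only [barSign, Pi.sub_apply, smul_sub, sum_sub_distrib]

theorem barSign_const (m : ℕ) (c : M) :
    barSign m (Function.const ℕ c) = ((m + 1).choose 2 : ℤ) • c := by
  simp only [barSign, Function.const_apply, ← sum_smul, sum_range_sub_cast]

theorem barSign_blockStart_of_support (n : ℕ → ℕ) (m : ℕ) (x : ℕ → M)
    (hx : ∀ v < blockStart n m, (∀ u < m, blockStart n u ≠ v) → x v = 0) :
    barSign (blockStart n m) x = barSign m (x ∘ blockStart n)
      + ∑ j ∈ range m, ∑ u ∈ range (j + 1), (n j : ℤ) • x (blockStart n u) := by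
  have hmono := blockStart_strictMono n
  calc barSign (blockStart n m) x
      = ∑ u ∈ range m, ((blockStart n m : ℤ) - blockStart n u) • x (blockStart n u) := by
        refine (sum_of_injOn (blockStart n) hmono.injective.injOn ?_ ?_ fun _ _ ↦ rfl).symm
        · intro u hu
          simpa using hmono (mem_range.mp hu)
        · intro v hv hvu
          rw [hx v (mem_range.mp hv) (by simpa using hvu), smul_zero]
    _ = ∑ u ∈ range m, (((m : ℤ) - u) • x (blockStart n u)
          + ∑ j ∈ Ico u m, (n j : ℤ) • x (blockStart n u)) := by
        refine sum_congr rfl fun u hu ↦ ?_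
        rw [blockStart_sub_blockStart n (mem_range.mp hu).le, add_smul, sum_smul]
    _ = barSign m (x ∘ blockStart n)
          + ∑ j ∈ range m, ∑ u ∈ range (j + 1), (n j : ℤ) • x (blockStart n u) := by
        rw [sum_add_distrib]
        simp only [range_eq_Ico, sum_Ico_Ico_comm, barSign, Function.comp_apply]

theorem sum_sum_range_smul_sub (n : ℕ → ℕ) (m : ℕ) (k : ℕ → M) (c : M) :
    ∑ j ∈ range m, ∑ u ∈ range (j + 1), (n j : ℤ) • (k u - c)
      = ∑ j ∈ range m, ∑ u ∈ range (j + 1), (n j : ℤ) • k u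
        - (∑ j ∈ range m, ((j : ℤ) + 1) * n j) • c := by
  simp only [smul_sub, sum_sub_distrib, sum_const, card_range, sum_smul, mul_smul,
    ← natCast_zsmul _ (_ + 1), Nat.cast_add, Nat.cast_one]

theorem bar_expansion_sign_rule_general (m : ℕ) (n : ℕ → ℕ) (c : M) (k l : ℕ → M)
    (hk : ∀ u < m, l (blockStart n u) = k u)
    (hc : ∀ v < blockStart n m, (∀ u < m, blockStart n u ≠ v) → l v = c) :
    barSign (blockStart n m) l - barSign m k
      = ((∑ j ∈ range m, n j + 1).choose 2 + ∑ j ∈ range m, ((m : ℤ) - 1 - j) * n j) • c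
        + ∑ j ∈ range m, ∑ u ∈ range (j + 1), (n j : ℤ) • k u := by
  have supported := barSign_blockStart_of_support n m (l - Function.const ℕ c)
    fun v hv hvu ↦ sub_eq_zero.mpr (hc v hv hvu)
  have on_starts : barSign m ((l - Function.const ℕ c) ∘ blockStart n)
      = barSign m (k - Function.const ℕ c) :=
    barSign_congr fun u hu ↦ congrArg (· - c) (hk u hu)
  have double_sum :
      ∑ j ∈ range m, ∑ u ∈ range (j + 1), (n j : ℤ) • (l - Function.const ℕ c) (blockStart n u)
        = ∑ j ∈ range m, ∑ u ∈ range (j + 1), (n j : ℤ) • (k u - c) :=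
    sum_congr rfl fun j hj ↦ sum_congr rfl fun u hu ↦ by
      rw [Pi.sub_apply, Function.const_apply, hk u (by grind)]
  rw [on_starts, double_sum, sum_sum_range_smul_sub, barSign_sub, barSign_sub, barSign_const,
    barSign_const, blockStart_succ_choose_two, sub_eq_iff_eq_add] at supported
  rw [supported]
  module

end BarSign

/-- Lemma (the sign rule for the expansion of the bar complex of a twisted envelope):
`σ(l₀,…,l_{s+1}) − σ(k₀,…,k_{r+1}) = C(N+1,2) + Σ_u (r−u)·n_u + Σ_{u ≤ u'} k_u·n_{u'}`,
where `σ(k₀,…,k_{r+1}) = Σ_{u=0}^{r} (r+1−u)·k_u` and `N = n₀ + ⋯ + n_r`. -/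
theorem bar_expansion_sign_rule (r : ℕ) (n : ℕ → ℕ) (k : ℕ → ℤ) (l : ℕ → ℤ)
    (p : ℕ → ℕ) (hp : ∀ u, p u = u + ∑ i ∈ range u, n i)
    (N : ℕ) (hN : N = ∑ i ∈ range (r + 1), n i)
    (s : ℕ) (hs : s = r + N)
    (hl1 : ∀ u ≤ r + 1, l (p u) = k u)
    (hl2 : ∀ v ≤ s + 1, (∀ u ≤ r + 1, p u ≠ v) → l v = 1) :
    (∑ v ∈ range (s + 1), ((s : ℤ) + 1 - (v : ℤ)) * l v)
      - (∑ u ∈ range (r + 1), ((r : ℤ) + 1 - (u : ℤ)) * k u)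
    = ((N + 1).choose 2 : ℤ)
      + (∑ u ∈ range (r + 1), ((r : ℤ) - (u : ℤ)) * (n u : ℤ))
      + (∑ u' ∈ range (r + 1), ∑ u ∈ range (u' + 1), k u * (n u' : ℤ)) := by
  obtain rfl : p = blockStart n := funext hp
  have hps : blockStart n (r + 1) = s + 1 := by rw [hs, hN, blockStart]; ring
  have h := bar_expansion_sign_rule_general (r + 1) n 1 k l (fun u hu ↦ hl1 u hu.le)
    fun v hv hvu ↦ hl2 v (by omega) fun u hu ↦
      hu.lt_or_eq.elim (hvu u) fun hur ↦ hur ▸ hv.ne'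
  simpa [barSign, hps, ← hN, mul_comm] using h
end
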